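/- Let S be a conditionally completely regular semigroup, let s ∈ S, and let s' be a weak inverse of s. Then every ℋ-class of the 𝒟-class of s' contains a weak inverse of s: for every x ∈ S with x 𝒟 s', there exists a weak inverse s'' of s with s'' ℋ x. -/

import Mathlib

/-- Green's relation ℒ: `s ℒ t` iff `{s} ∪ Ss = {t} ∪ St`. -/
def LRel {S : Type*} [Semigroup S] (s t : S) : Prop :=
  ({s} ∪ {x | ∃ a : S, x = a * s} : Set S) = ({t} ∪ {x | ∃ a : S, x = a * t} : Set S)

/-- Green's relation ℛ: `s ℛ t` iff `{s} ∪ sS = {t} ∪ tS`. -/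
def RRel {S : Type*} [Semigroup S] (s t : S) : Prop :=
  ({s} ∪ {x | ∃ a : S, x = s * a} : Set S) = ({t} ∪ {x | ∃ a : S, x = t * a} : Set S)

/-- Green's relation ℋ = ℒ ∩ ℛ. -/
def HRel {S : Type*} [Semigroup S] (s t : S) : Prop := LRel s t ∧ RRel s t

/-- Green's relation 𝒟: `s 𝒟 t` iff `∃ u, s ℒ u` and `u ℛ t`. -/
def DRel {S : Type*} [Semigroup S] (s t : S) : Prop := ∃ u : S, LRel s u ∧ RRel u t

/-- An element `s` is regular if `s = s * x * s` for some `x`. -/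
def IsRegularElem {S : Type*} [Semigroup S] (s : S) : Prop := ∃ x : S, s = s * x * s

/-- `S` is conditionally completely regular if every regular element is
ℋ-related to an idempotent. -/
def CondCompletelyRegular (S : Type*) [Semigroup S] : Prop :=
  ∀ s : S, IsRegularElem s → ∃ e : S, e * e = e ∧ HRel s e

theorem lRel_of_eq_mul {S : Type*} [Semigroup S] {x u c d : S} (hx : x = c * u)
    (hu : u = d * x) : LRel x u := by
  ext z
  simp only [Set.mem_union, Set.mem_singleton_iff, Set.mem_ofPred_eq]
  constructor
  · rintro (rfl | ⟨a, rfl⟩)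
    · exact Or.inr ⟨c, hx⟩
    · exact Or.inr ⟨a * c, by rw [mul_assoc, ← hx]⟩
  · rintro (rfl | ⟨a, rfl⟩)
    · exact Or.inr ⟨d, hu⟩
    · exact Or.inr ⟨a * d, by rw [mul_assoc, ← hu]⟩

theorem rRel_of_eq_mul {S : Type*} [Semigroup S] {x u c d : S} (hx : x = u * c)
    (hu : u = x * d) : RRel x u := by
  ext z
  simp only [Set.mem_union, Set.mem_singleton_iff, Set.mem_ofPred_eq]
  constructor
  · rintro (rfl | ⟨a, rfl⟩)
    · exact Or.inr ⟨c, hx⟩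
    · exact Or.inr ⟨c * a, by rw [← mul_assoc, ← hx]⟩
  · rintro (rfl | ⟨a, rfl⟩)
    · exact Or.inr ⟨d, hu⟩
    · exact Or.inr ⟨d * a, by rw [← mul_assoc, ← hu]⟩

theorem LRel.exists_eq_mul {S : Type*} [Semigroup S] {x u : S} (h : LRel x u)
    (hr : IsRegularElem u) : (∃ c, x = c * u) ∧ ∃ d, u = d * x := by
  obtain ⟨v, hv⟩ := hr
  have hx : x ∈ ({u} ∪ {z | ∃ a : S, z = a * u} : Set S) := h ▸ Or.inl rfl
  have hu : u ∈ ({x} ∪ {z | ∃ a : S, z = a * x} : Set S) := h.symm ▸ Or.inl rfl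
  constructor
  · rcases hx with hx | hx
    · rw [Set.mem_singleton_iff] at hx
      exact ⟨u * v, hx.trans hv⟩
    · exact hx
  · rcases hu with hu | hu
    · rw [Set.mem_singleton_iff] at hu
      exact ⟨u * v, by rw [← hu]; exact hv⟩
    · exact hu

theorem RRel.exists_eq_mul {S : Type*} [Semigroup S] {x u : S} (h : RRel x u)
    (hr : IsRegularElem u) : (∃ c, x = u * c) ∧ ∃ d, u = x * d := by
  obtain ⟨v, hv⟩ := hr
  rw [mul_assoc] at hv
  have hx : x ∈ ({u} ∪ {z | ∃ a : S, z = u * a} : Set S) := h ▸ Or.inl rfl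
  have hu : u ∈ ({x} ∪ {z | ∃ a : S, z = x * a} : Set S) := h.symm ▸ Or.inl rfl
  constructor
  · rcases hx with hx | hx
    · rw [Set.mem_singleton_iff] at hx
      exact ⟨v * u, hx.trans hv⟩
    · exact hx
  · rcases hu with hu | hu
    · rw [Set.mem_singleton_iff] at hu
      exact ⟨v * u, by rw [← hu]; exact hv⟩
    · exact hu

theorem IsRegularElem.of_lRel {S : Type*} [Semigroup S] {x u : S} (hr : IsRegularElem u)
    (h : LRel x u) : IsRegularElem x := by
  obtain ⟨⟨c, hc⟩, d, hd⟩ := h.exists_eq_mul hr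
  obtain ⟨v, hv⟩ := hr
  refine ⟨v * d, ?_⟩
  calc x = c * (u * v * u) := by rw [← hv, hc]
    _ = c * u * v * u := by simp only [mul_assoc]
    _ = x * v * (d * x) := by rw [← hc, ← hd]
    _ = x * (v * d) * x := by simp only [mul_assoc]

theorem isRegularElem_of_mul_self {S : Type*} [Semigroup S] {e : S} (he : e * e = e) :
    IsRegularElem e := ⟨e, by rw [he, he]⟩

/-- If an idempotent lies in `L_a ∩ R_b`, then `a * b` lies in `R_a ∩ L_b`. -/
theorem exists_eq_mul_mul_of_idempotent {S : Type*} [Semigroup S] {a b f : S}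
    (hf : f * f = f) (hL : LRel a f) (hR : RRel b f) :
    (∃ z, a = a * b * z) ∧ ∃ y, b = y * (a * b) := by
  obtain ⟨⟨c, hc⟩, y, hy⟩ := hL.exists_eq_mul (isRegularElem_of_mul_self hf)
  obtain ⟨⟨d, hd⟩, z, hz⟩ := hR.exists_eq_mul (isRegularElem_of_mul_self hf)
  constructor
  · exact ⟨z, by rw [mul_assoc, ← hz, hc, mul_assoc, hf]⟩
  · exact ⟨y, by rw [← mul_assoc, ← hy, hd, ← mul_assoc, hf]⟩

/-- If `e * s * e` lies in the group `H_e`, then its inverse there is a weak inverse of `s`. -/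
theorem exists_weakInverse_hRel_idempotent {S : Type*} [Semigroup S] {e s z y : S}
    (he : e * e = e) (hz : e = e * s * e * z) (hy : e = y * (e * s * e)) :
    ∃ q : S, q = q * s * q ∧ HRel q e := by
  have hae : e * s * e * e = e * s * e := by rw [mul_assoc, he]
  have hea : e * (e * s * e) = e * s * e := by simp only [← mul_assoc, he]
  have haq : e * s * e * (e * z * e) = e := by
    rw [← mul_assoc, ← mul_assoc, hae, ← hz, he]
  have hpa : e * y * e * (e * s * e) = e := by
    rw [mul_assoc, hea, mul_assoc, ← hy, he]
  have hpq : e * y * e = e * z * e := by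
    calc e * y * e = e * y * e * (e * s * e * (e * z * e)) := by
          rw [haq, mul_assoc (e * y), he]
      _ = e * (e * z * e) := by rw [← mul_assoc, hpa]
      _ = e * z * e := by simp only [← mul_assoc, he]
  rw [hpq] at hpa
  have heq : e * (e * z * e) = e * z * e := by simp only [← mul_assoc, he]
  have hqe : e * z * e * e = e * z * e := by rw [mul_assoc, he]
  generalize e * z * e = q at *
  refine ⟨q, ?_, lRel_of_eq_mul hqe.symm haq.symm, rRel_of_eq_mul heq.symm hpa.symm⟩
  calc q = q * (e * s * e * q) := by rw [haq, hqe]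
    _ = q * e * s * (e * q) := by simp only [mul_assoc]
    _ = q * s * q := by rw [hqe, heq]

/-- In a conditionally completely regular semigroup, if `s'` is a weak inverse of
`s`, then every ℋ-class of the 𝒟-class of `s'` contains a weak inverse of `s`. -/
theorem stmt12 {S : Type*} [Semigroup S] (hS : CondCompletelyRegular S)
    (s s' : S) (hw : s' = s' * s * s') :
    ∀ x : S, DRel x s' → ∃ s'' : S, s'' = s'' * s * s'' ∧ HRel s'' x := by
  rintro x ⟨u, hxu, hut⟩
  have ht : IsRegularElem s' := ⟨s, hw⟩
  obtain ⟨⟨w, hu⟩, w', ht'⟩ := hut.exists_eq_mul ht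
  have htsu : u = s' * (s * u) := by
    rw [hu]; simp only [← mul_assoc]; rw [← hw]
  have hur : IsRegularElem u := ⟨w' * s, by
    rw [← mul_assoc, ← ht', mul_assoc]; exact htsu⟩
  obtain ⟨e, he, hxe⟩ := hS x (hur.of_lRel hxu)
  have hsuL : LRel (s * u) u := lRel_of_eq_mul rfl htsu
  have hsuR : RRel (s * s') (s * u) :=
    rRel_of_eq_mul (by rw [mul_assoc, ← ht']) (by rw [mul_assoc, ← hu])
  obtain ⟨f, hf, hfL, hfR⟩ := hS _ (hur.of_lRel hsuL)
  have hef : LRel e f := hxe.1.symm.trans (hxu.trans (hsuL.symm.trans hfL))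
  obtain ⟨⟨z, hz⟩, -⟩ := exists_eq_mul_mul_of_idempotent hf hef (hsuR.trans hfR)
  have hz' : e = e * s * (s' * z) := hz.trans (by simp only [mul_assoc])
  have hesR : RRel e (e * s) := rRel_of_eq_mul hz' rfl
  obtain ⟨g, hg, hgL, hgR⟩ := hS (e * s) ⟨s' * z, by rw [← hz', ← mul_assoc, he]⟩
  obtain ⟨⟨a, ha⟩, y, hy⟩ := exists_eq_mul_mul_of_idempotent hg hgL (hesR.trans hgR)
  obtain ⟨q, hq, hqe⟩ := exists_weakInverse_hRel_idempotent (z := a * (s' * z)) he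
    (by rw [← mul_assoc, ← ha]; exact hz') hy
  exact ⟨q, hq, hqe.1.trans hxe.1.symm, hqe.2.trans hxe.2.symm⟩
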